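/- arXiv:2603.27072 — 4 statements merged into one kernel-verified Lean document; each statement's English description precedes it below -/
import Mathlib

section
/- Let L ≥ 3 be an integer, λ > 0, q := 2/L, and let φ_m(ρ) := (m − ρ)² + λ|ρ|^q for ρ ∈ ℝ. If m ∈ ℝ satisfies |m| ≠ τ, where τ := (1 − q/2)·λ^{1/(2−q)}·(1 − q)^{(q−1)/(2−q)}, then φ_m has a unique global minimizer over ℝ. -/
/-- `φ_m(ρ) = (m − ρ)² + λ|ρ|^q`. -/
noncomputable def phi (m lam q ρ : ℝ) : ℝ := (m - ρ) ^ 2 + lam * |ρ| ^ q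

lemma phi_neg (m lam q x : ℝ) : phi (-m) lam q (-x) = phi m lam q x := by
  unfold phi; rw [abs_neg]; ring

lemma phi_deriv (m lam q x : ℝ) (hx : 0 < x) :
    HasDerivAt (phi m lam q) (2 * (x - m) + lam * q * x ^ (q - 1)) x := by
  have h1 : HasDerivAt (fun y : ℝ => (m - y) ^ 2 + lam * y ^ q)
      (2 * (x - m) + lam * q * x ^ (q - 1)) x := by
    have ha := ((hasDerivAt_id x).const_sub m).pow 2
    have hb := (Real.hasDerivAt_rpow_const (x := x) (p := q) (Or.inl hx.ne')).const_mul lam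
    refine (ha.add hb).congr_deriv ?_
    simp
    ring
  refine h1.congr_of_eventuallyEq ?_
  filter_upwards [lt_mem_nhds hx] with y hy
  simp [phi, abs_of_pos hy]

lemma phi_cont (m lam q : ℝ) (hq : 0 < q) : Continuous (phi m lam q) := by
  unfold phi
  have : Continuous fun x : ℝ => |x| ^ q :=
    continuous_abs.rpow_const (fun x => Or.inr hq.le)
  fun_prop

lemma phi_zero (m lam q : ℝ) (hq : 0 < q) : phi m lam q 0 = m ^ 2 := by
  simp [phi, Real.zero_rpow hq.ne']

lemma phi_exists (m lam q : ℝ) (hlam : 0 < lam) (hq : 0 < q) (hm : 0 ≤ m) :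
    ∃ ρ, ∀ x, phi m lam q ρ ≤ phi m lam q x := by
  obtain ⟨ρ, -, h⟩ := (isCompact_Icc (a := -(2*m)) (b := 2*m)).exists_isMinOn
    ⟨0, by constructor <;> linarith⟩ (phi_cont m lam q hq).continuousOn
  refine ⟨ρ, fun x => ?_⟩
  by_cases hx : x ∈ Set.Icc (-(2*m)) (2*m)
  · exact h hx
  · have h0 : phi m lam q ρ ≤ phi m lam q 0 := h (show (0:ℝ) ∈ Set.Icc (-(2*m)) (2*m) by constructor <;> linarith)
    rw [phi_zero _ _ _ hq] at h0
    refine h0.trans ?_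
    have : 0 ≤ lam * |x| ^ q := by positivity
    unfold phi
    rw [Set.mem_Icc, not_and_or, not_le, not_le] at hx
    rcases hx with hx | hx <;> nlinarith

lemma min_nonneg (m lam q : ℝ) (hm : 0 < m) (ρ : ℝ)
    (h : ∀ x, phi m lam q ρ ≤ phi m lam q x) : 0 ≤ ρ := by
  by_contra hc
  have := h (-ρ)
  unfold phi at this
  rw [abs_neg] at this
  nlinarith

lemma min_crit (m lam q ρ : ℝ) (hρ : 0 < ρ)
    (h : ∀ x, phi m lam q ρ ≤ phi m lam q x) : 2 * (ρ - m) + lam * q * ρ ^ (q - 1) = 0 :=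
  IsLocalMin.hasDerivAt_eq_zero (Filter.Eventually.of_forall h) (phi_deriv m lam q ρ hρ)

lemma strictConvexOn_rpow_of_neg {p : ℝ} (hp : p < 0) :
    StrictConvexOn ℝ (Set.Ioi 0) fun x : ℝ => x ^ p := by
  have hc : ContinuousOn (fun x : ℝ => x ^ p) (Set.Ioi 0) := fun x hx =>
    (Real.continuousAt_rpow_const x p (Or.inl (ne_of_gt hx))).continuousWithinAt
  refine StrictMonoOn.strictConvexOn_of_deriv (convex_Ioi 0) hc ?_
  rw [interior_Ioi]
  intro x hx y hy hxy
  have hx' : 0 < x := hx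
  have hy' : 0 < y := hy
  rw [(Real.hasDerivAt_rpow_const (p := p) (Or.inl hx'.ne')).deriv,
    (Real.hasDerivAt_rpow_const (p := p) (Or.inl hy'.ne')).deriv]
  exact mul_lt_mul_of_neg_left
    (Real.rpow_lt_rpow_of_neg hx' hxy (by linarith)) hp

lemma no_two_pos (m lam q a b : ℝ) (hlam : 0 < lam) (hq : 0 < q) (hq1 : q < 1)
    (ha : 0 < a) (hab : a < b)
    (h1 : ∀ x, phi m lam q a ≤ phi m lam q x) (h2 : ∀ x, phi m lam q b ≤ phi m lam q x) :
    False := by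
  have hb := ha.trans hab
  have ca := min_crit m lam q a ha h1
  have cb := min_crit m lam q b hb h2
  have hanti : StrictAntiOn (phi m lam q) (Set.Icc a b) := by
    refine strictAntiOn_of_deriv_neg (convex_Icc a b) (phi_cont m lam q hq).continuousOn ?_
    intro x hx
    rw [interior_Icc] at hx
    have hx0 : 0 < x := ha.trans hx.1
    rw [(phi_deriv m lam q x hx0).deriv]
    have hsl := (strictConvexOn_rpow_of_neg (p := q - 1) (by linarith)).slope_strict_mono_adjacent
      (Set.mem_Ioi.2 ha) (Set.mem_Ioi.2 hb) hx.1 hx.2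
    rw [div_lt_div_iff₀ (by linarith [hx.1]) (by linarith [hx.2])] at hsl
    have hlq : 0 < lam * q := mul_pos hlam hq
    have k := mul_lt_mul_of_pos_left hsl hlq
    have hba : 0 < b - a := by linarith
    by_contra hc
    push Not at hc
    have := mul_nonneg hc hba.le
    have e1 : lam * q * a ^ (q-1) = 2 * (m - a) := by linarith
    have e2 : lam * q * b ^ (q-1) = 2 * (m - b) := by linarith
    have k2 : (lam * q * x ^ (q-1) - lam * q * a ^ (q-1)) * (b - x) <
      (lam * q * b ^ (q-1) - lam * q * x ^ (q-1)) * (x - a) := by linarith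
    rw [e1, e2] at k2
    nlinarith
  have := hanti (Set.left_mem_Icc.2 hab.le) (Set.right_mem_Icc.2 hab.le) hab
  linarith [h1 b]

lemma zero_pos (m lam q b : ℝ) (hlam : 0 < lam) (hq : 0 < q) (hq1 : q < 1) (hb : 0 < b)
    (h1 : ∀ x, phi m lam q 0 ≤ phi m lam q x) (h2 : ∀ x, phi m lam q b ≤ phi m lam q x) :
    m = (1 - q / 2) * lam ^ (1 / (2 - q)) * (1 - q) ^ ((q - 1) / (2 - q)) := by
  have cb := min_crit m lam q b hb h2
  have e := le_antisymm (h1 b) (h2 0)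
  rw [phi_zero _ _ _ hq] at e
  unfold phi at e
  rw [abs_of_pos hb] at e
  have r1 : b ^ (q - 1) * b = b ^ q := by
    rw [← Real.rpow_add_one hb.ne']; congr 1; ring
  have r2 : b ^ (q - 1) * b ^ (2 - q) = b := by
    rw [← Real.rpow_add hb]; norm_num
  have e3 : b - 2 * m + lam * b ^ (q-1) = 0 := by
    apply mul_left_cancel₀ hb.ne'
    rw [← r1] at e
    linarith
  have e4 : b = (1 - q) * (lam * b ^ (q-1)) := by linarith
  have hp : 0 < b ^ (q-1) := by positivity
  have h1q : 0 < 1 - q := by linarith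
  have e5 : lam = b ^ (2 - q) / (1 - q) := by
    rw [eq_div_iff h1q.ne']
    apply mul_left_cancel₀ hp.ne'
    rw [r2]; linarith
  have h2q : 2 - q ≠ 0 := by linarith
  have e6 : lam ^ (1 / (2 - q)) = b / (1 - q) ^ (1 / (2 - q)) := by
    rw [e5, Real.div_rpow (by positivity) h1q.le, ← Real.rpow_mul hb.le,
      mul_one_div_cancel h2q, Real.rpow_one]
  have e7 : (1 - q) ^ ((q - 1) / (2 - q)) = (1 - q) ^ (1 / (2 - q)) / (1 - q) := by
    rw [← Real.rpow_sub_one h1q.ne']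
    congr 1
    field_simp
    ring
  have hp2 : (1 - q) ^ (1 / (2 - q)) ≠ 0 := by positivity
  rw [e6, e7]
  have : (1 - q / 2) * (b / (1 - q) ^ (1 / (2 - q))) * ((1 - q) ^ (1 / (2 - q)) / (1 - q))
      = (1 - q / 2) * b / (1 - q) := by field_simp
  rw [this, eq_div_iff h1q.ne']
  linear_combination (-(1 - q) / 2) * e3 - e4 / 2

lemma uniq_nonneg (m lam q : ℝ) (hlam : 0 < lam) (hq : 0 < q) (hq1 : q < 1) (hm : 0 ≤ m)
    (hne : m ≠ (1 - q / 2) * lam ^ (1 / (2 - q)) * (1 - q) ^ ((q - 1) / (2 - q))) :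
    ∃! ρ : ℝ, ∀ x : ℝ, phi m lam q ρ ≤ phi m lam q x := by
  obtain ⟨ρ, hρ⟩ := phi_exists m lam q hlam hq hm
  refine ⟨ρ, hρ, ?_⟩
  intro σ hσ
  rcases hm.eq_or_lt with rfl | hm
  · have key : ∀ y, (∀ x, phi 0 lam q y ≤ phi 0 lam q x) → y = 0 := by
      intro y hy
      by_contra hne
      have := hy 0
      rw [phi_zero _ _ _ hq] at this
      unfold phi at this
      have : 0 < lam * |y| ^ q := by positivity
      nlinarith [sq_nonneg (0 - y)]
    rw [key ρ hρ, key σ hσ]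
  · have key : ∀ a b, (∀ x, phi m lam q a ≤ phi m lam q x) →
        (∀ x, phi m lam q b ≤ phi m lam q x) → ¬ a < b := by
      intro a b h1 h2 hab
      rcases (min_nonneg m lam q hm a h1).eq_or_lt with h0 | h0
      · subst h0
        exact hne (zero_pos m lam q b hlam hq hq1 hab h1 h2)
      · exact no_two_pos m lam q a b hlam hq hq1 h0 hab h1 h2
    exact le_antisymm (not_lt.1 (key ρ σ hρ hσ)) (not_lt.1 (key σ ρ hσ hρ))


/-- For `L ≥ 3`, `λ > 0`, `q = 2/L`, if `|m| ≠ τ` where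
`τ = (1 − q/2)·λ^{1/(2−q)}·(1 − q)^{(q−1)/(2−q)}`, then `φ_m` has a unique
global minimizer over `ℝ`. -/
theorem stmt0 (L : ℕ) (hL : 3 ≤ L) (lam : ℝ) (hlam : 0 < lam) (m q τ : ℝ)
    (hq : q = 2 / L)
    (hτ : τ = (1 - q / 2) * lam ^ (1 / (2 - q)) * (1 - q) ^ ((q - 1) / (2 - q)))
    (hm : |m| ≠ τ) :
    ∃! ρ : ℝ, ∀ x : ℝ, phi m lam q ρ ≤ phi m lam q x := by
  have hL' : (3:ℝ) ≤ L := by exact_mod_cast hL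
  have hq0 : 0 < q := by rw [hq]; positivity
  have hq1 : q < 1 := by rw [hq, div_lt_one (by linarith)]; linarith
  rcases le_total 0 m with h | h
  · rw [abs_of_nonneg h, hτ] at hm
    exact uniq_nonneg m lam q hlam hq0 hq1 h hm
  · rw [abs_of_nonpos h, hτ] at hm
    obtain ⟨ρ, h1, h2⟩ := uniq_nonneg (-m) lam q hlam hq0 hq1 (by linarith) hm
    have k : ∀ x, phi m lam q x = phi (-m) lam q (-x) := fun x => (phi_neg m lam q x).symm
    refine ⟨-ρ, fun x => ?_, fun y hy => ?_⟩
    · rw [k, k x, neg_neg]; exact h1 _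
    · have := h2 (-y) (fun x => by
        have := hy (-x)
        rw [k, k (-x), neg_neg] at this
        exact this)
      linarith
end

section
/- Let L ≥ 3 be an integer, λ > 0, q := 2/L, and let φ_m(ρ) := (m − ρ)² + λ|ρ|^q for ρ ∈ ℝ, with threshold τ := (1 − q/2)·λ^{1/(2−q)}·(1 − q)^{(q−1)/(2−q)}. If |m| = τ (in particular m ≠ 0), then the set of global minimizers of φ_m over ℝ is exactly the two-point set {0, sign(m)·(λ(1 − q))^{1/(2−q)}}. -/
theorem G_aux (lam q τ r0 : ℝ) (hlam : 0 < lam) (hq0 : 0 < q) (hq1 : q < 1)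
    (hr0 : r0 = (lam * (1 - q)) ^ (1 / (2 - q)))
    (hτ : τ = (1 - q / 2) * lam ^ (1 / (2 - q)) * (1 - q) ^ ((q - 1) / (2 - q))) :
    0 < r0 ∧ 0 < τ ∧ r0 ^ 2 - 2 * τ * r0 + lam * r0 ^ q = 0 ∧
      ∀ r : ℝ, 0 < r → r ≠ r0 → 0 < r ^ 2 - 2 * τ * r + lam * r ^ q := by
  have hp : 0 < 1 - q := by linarith
  have h2 : (2 - q) ≠ 0 := by linarith
  have hr0p : 0 < r0 := by rw [hr0]; positivity
  have hτp : 0 < τ := by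
    rw [hτ]
    have : 0 < 1 - q / 2 := by linarith
    positivity
  have hT : 2 * τ * (1 - q) = (2 - q) * r0 := by
    have h1 : (1 - q) ^ ((q - 1) / (2 - q)) * (1 - q) = (1 - q) ^ (1 / (2 - q)) := by
      rw [← Real.rpow_add_one hp.ne']
      congr 1
      field_simp
      ring
    rw [hτ, hr0, Real.mul_rpow hlam.le hp.le, ← h1]
    ring
  have hl : lam * (1 - q) * r0 ^ q = r0 ^ 2 := by
    have h1 : r0 ^ (2 - q) = lam * (1 - q) := by
      rw [hr0, ← Real.rpow_mul (by positivity), one_div_mul_cancel h2, Real.rpow_one]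
    rw [← h1, ← Real.rpow_add hr0p]
    norm_num
  refine ⟨hr0p, hτp, ?_, ?_⟩
  · have : (1 - q) * (r0 ^ 2 - 2 * τ * r0 + lam * r0 ^ q) = 0 := by
      linear_combination hl - r0 * hT
    rcases mul_eq_zero.1 this with h | h
    · linarith
    · exact h
  · intro r hr hne
    obtain ⟨t, rfl⟩ : ∃ t, r = t * r0 := ⟨r / r0, by field_simp⟩
    have ht : 0 < t := pos_of_mul_pos_left hr hr0p.le
    have ht1 : t ≠ 1 := by rintro rfl; simp at hne
    have hlog := Real.log_lt_sub_one_of_pos ht ht1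
    have hexp := Real.add_one_le_exp (Real.log t * (q - 1))
    rw [← Real.rpow_def_of_pos ht] at hexp
    have htq : t ^ q = t ^ (q - 1) * t := by
      rw [← Real.rpow_add_one ht.ne']; congr 1; ring
    have key : 0 < (1 - q) * t + t ^ (q - 1) - (2 - q) := by nlinarith
    have e : (1 - q) * ((t * r0) ^ 2 - 2 * τ * (t * r0) + lam * (t * r0) ^ q)
        = r0 ^ 2 * t * ((1 - q) * t + t ^ (q - 1) - (2 - q)) := by
      rw [Real.mul_rpow ht.le hr0p.le, htq]
      linear_combination t ^ (q - 1) * t * hl - t * r0 * hT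
    have : 0 < (1 - q) * ((t * r0) ^ 2 - 2 * τ * (t * r0) + lam * (t * r0) ^ q) := by
      rw [e]; positivity
    exact pos_of_mul_pos_right this hp.le

/-- For `L ≥ 3`, `λ > 0`, `q = 2/L` and threshold
`τ = (1 − q/2)·λ^{1/(2−q)}·(1 − q)^{(q−1)/(2−q)}`: if `|m| = τ`, then the set of
global minimizers of `φ_m` over `ℝ` is exactly `{0, sign(m)·(λ(1 − q))^{1/(2−q)}}`. -/
theorem stmt2 (L : ℕ) (hL : 3 ≤ L) (lam : ℝ) (hlam : 0 < lam) (m q τ : ℝ)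
    (hq : q = 2 / L)
    (hτ : τ = (1 - q / 2) * lam ^ (1 / (2 - q)) * (1 - q) ^ ((q - 1) / (2 - q)))
    (hm : |m| = τ) :
    {ρ : ℝ | ∀ x : ℝ, phi m lam q ρ ≤ phi m lam q x} =
      {0, Real.sign m * (lam * (1 - q)) ^ (1 / (2 - q))} := by
  have hL' : (3 : ℝ) ≤ L := by exact_mod_cast hL
  have hq0 : 0 < q := by rw [hq]; positivity
  have hq1 : q < 1 := by rw [hq, div_lt_one (by linarith)]; linarith
  obtain ⟨r0, hr0⟩ : ∃ r0, r0 = (lam * (1 - q)) ^ (1 / (2 - q)) := ⟨_, rfl⟩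
  obtain ⟨hr0p, hτp, hz, hpos⟩ := G_aux lam q τ r0 hlam hq0 hq1 hr0 hτ
  rw [← hr0]
  have hnn : ∀ r : ℝ, 0 < r → 0 ≤ r ^ 2 - 2 * τ * r + lam * r ^ q := by
    intro r hr
    by_cases h : r = r0
    · rw [h, hz]
    · exact (hpos r hr h).le
  have h0 : phi m lam q 0 = m ^ 2 := by
    simp [phi, Real.zero_rpow hq0.ne']
  have hphi : ∀ x, phi m lam q x =
      m ^ 2 + (|x| ^ 2 - 2 * τ * |x| + lam * |x| ^ q) + 2 * (|m * x| - m * x) := by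
    intro x
    rw [phi, abs_mul, hm, sq_abs]; ring
  have hmin : ∀ x, m ^ 2 ≤ phi m lam q x := by
    intro x
    by_cases hx : x = 0
    · rw [hx, h0]
    · rw [hphi]
      have := hnn |x| (abs_pos.2 hx)
      have := le_abs_self (m * x)
      linarith
  have hs : |Real.sign m * r0| = r0 ∧ 0 ≤ m * (Real.sign m * r0) ∧
      ∀ x, |x| = r0 → 0 ≤ m * x → x = Real.sign m * r0 := by
    have hm0 : m ≠ 0 := by rintro rfl; simp at hm; linarith
    rcases lt_or_gt_of_ne hm0 with h | h
    · rw [Real.sign_of_neg h]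
      refine ⟨by simp [abs_of_pos hr0p], by nlinarith, fun x hx hmx => ?_⟩
      rw [← hx, abs_of_nonpos (by nlinarith)]; ring
    · rw [Real.sign_of_pos h]
      refine ⟨by simp [abs_of_pos hr0p], by nlinarith, fun x hx hmx => ?_⟩
      rw [← hx, abs_of_nonneg (by nlinarith)]; ring
  obtain ⟨hs1, hs2, hs3⟩ := hs
  ext ρ
  simp only [Set.mem_setOf_eq, Set.mem_insert_iff, Set.mem_singleton_iff]
  constructor
  · intro h
    by_cases hx : ρ = 0
    · exact Or.inl hx
    · right
      have h1 := h 0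
      rw [h0, hphi] at h1
      have h2 := hnn |ρ| (abs_pos.2 hx)
      have h3 := le_abs_self (m * ρ)
      apply hs3
      · by_contra hne
        have := hpos |ρ| (abs_pos.2 hx) hne
        linarith
      · have : |m * ρ| ≤ m * ρ := by linarith
        exact (abs_nonneg _).trans this
  · rintro (rfl | rfl) x
    · rw [h0]; exact hmin x
    · rw [hphi (Real.sign m * r0), hs1, hz, abs_of_nonneg hs2]
      have := hmin x
      linarith
end

section
/- Let L ≥ 3 be an integer, λ > 0, q := 2/L, and consider the ℓ²-regularized deep scalar factorization objective 𝓛(w) := (m − w_L·w_{L−1}···w_1)² + (λ/L)·Σ_{i=1}^L w_i² for w = (w_1, …, w_L) ∈ ℝ^L. Suppose |m| > τ, where τ := (1 − q/2)·λ^{1/(2−q)}·(1 − q)^{(q−1)/(2−q)}. Then for every global minimizer w* ∈ ℝ^L of 𝓛, the value w := |w*_1| is the same for all global minimizers, and the L×L Hessian matrix H of 𝓛 at w*, with entries H_{jk} = ∂²𝓛/∂w_j∂w_k(w*), has characteristic polynomial det(x·I − H) = (x − 4λ/L)^{L−1} · (x − (2L·w^{2L−2} + 4λ/L − 2λ)); that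 is, H has eigenvalue 4λ/L with multiplicity L−1 and eigenvalue 2L·w^{2L−2} + 4λ/L − 2λ with multiplicity 1, so the Hessian spectrum is constant across all global minimizers. -/
/-- The ℓ²-regularized deep scalar factorization objective
`𝓛(w) = (m − w_L ⋯ w_1)² + (λ/L) ∑ᵢ wᵢ²`. -/
noncomputable def scalarLoss (m lam : ℝ) (L : ℕ) (w : Fin L → ℝ) : ℝ :=
  (m - ∏ i, w i) ^ 2 + (lam / L) * ∑ i, (w i) ^ 2

open Finset in
lemma aux_prod (L : ℕ) (v : Fin L → ℝ) (k : Fin L) (t : ℝ) :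
    ∏ i, (v + t • (Pi.single k 1 : Fin L → ℝ)) i = (v k + t) * ∏ i ∈ univ.erase k, v i := by
  rw [← mul_prod_erase univ _ (mem_univ k)]
  congr 1
  · simp
  · refine prod_congr rfl fun i hi => ?_
    have : i ≠ k := ne_of_mem_erase hi
    simp [this]

open Finset in
lemma aux_sum (L : ℕ) (v : Fin L → ℝ) (k : Fin L) (t : ℝ) :
    ∑ i, ((v + t • (Pi.single k 1 : Fin L → ℝ)) i) ^ 2 = ∑ i, v i ^ 2 + (2 * t * v k + t ^ 2) := by
  rw [← add_sum_erase univ _ (mem_univ k), ← add_sum_erase univ (fun i => v i ^ 2) (mem_univ k)]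
  have : ∑ i ∈ univ.erase k, ((v + t • (Pi.single k 1 : Fin L → ℝ)) i) ^ 2
      = ∑ i ∈ univ.erase k, v i ^ 2 := by
    refine sum_congr rfl fun i hi => ?_
    have : i ≠ k := ne_of_mem_erase hi
    simp [this]
  rw [this]
  simp
  ring

open Finset in
lemma aux_loss (m lam : ℝ) (L : ℕ) (v : Fin L → ℝ) (k : Fin L) (t : ℝ) :
    scalarLoss m lam L (v + t • (Pi.single k 1 : Fin L → ℝ)) =
      (m - (v k + t) * ∏ i ∈ univ.erase k, v i) ^ 2
        + lam / L * (∑ i, v i ^ 2 + (2 * t * v k + t ^ 2)) := by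
  rw [scalarLoss, aux_prod, aux_sum]

open Finset in
lemma aux_deriv (m lam : ℝ) (L : ℕ) (v : Fin L → ℝ) (k : Fin L) :
    deriv (fun t : ℝ => scalarLoss m lam L (v + t • (Pi.single k 1 : Fin L → ℝ))) 0 =
      -2 * (m - v k * ∏ i ∈ univ.erase k, v i) * (∏ i ∈ univ.erase k, v i)
        + 2 * (lam / L) * v k := by
  simp_rw [aux_loss]
  set Q := ∏ i ∈ univ.erase k, v i
  set S := ∑ i, v i ^ 2
  have h1 : HasDerivAt (fun t : ℝ => m - (v k + t) * Q) (-(1 * Q)) 0 :=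
    (((hasDerivAt_id (0:ℝ)).const_add (v k)).mul_const Q).const_sub m
  have h2 : HasDerivAt (fun t : ℝ => S + (2 * t * v k + t ^ 2)) (2 * 1 * v k + 2 * 0) 0 := by
    have := ((((hasDerivAt_id (0:ℝ)).const_mul 2).mul_const (v k)).add
      ((hasDerivAt_id (0:ℝ)).pow 2)).const_add S
    exact this.congr_deriv (by simp)
  have h3 := (h1.pow 2).add (h2.const_mul (lam / L))
  refine h3.deriv.trans ?_
  simp
  ring

open Finset in
lemma aux_hess_diag (m lam : ℝ) (L : ℕ) (w : Fin L → ℝ) (k : Fin L) :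
    deriv (fun s : ℝ => deriv (fun t : ℝ =>
      scalarLoss m lam L (w + s • (Pi.single k 1 : Fin L → ℝ)
        + t • (Pi.single k 1 : Fin L → ℝ))) 0) 0 =
      2 * (∏ i ∈ univ.erase k, w i) ^ 2 + 2 * (lam / L) := by
  simp_rw [aux_deriv]
  set Q := ∏ i ∈ univ.erase k, w i with hQ
  have e : ∀ s : ℝ, ∏ i ∈ univ.erase k, (w + s • (Pi.single k 1 : Fin L → ℝ)) i = Q := by
    intro s
    refine prod_congr rfl fun i hi => ?_
    have : i ≠ k := ne_of_mem_erase hi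
    simp [this]
  have e2 : ∀ s : ℝ, (w + s • (Pi.single k 1 : Fin L → ℝ)) k = w k + s := by
    intro s; simp
  simp_rw [e, e2]
  have h0 := (hasDerivAt_id (0:ℝ)).const_add (w k)
  have h1 := (((h0.mul_const Q).const_sub m).const_mul (-2)).mul_const Q
  have h3 := h1.add (h0.const_mul (2 * (lam / L)))
  refine h3.deriv.trans ?_
  ring

open Finset in
lemma aux_hess_off (m lam : ℝ) (L : ℕ) (w : Fin L → ℝ) (j k : Fin L) (hjk : j ≠ k) :
    deriv (fun s : ℝ => deriv (fun t : ℝ =>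
      scalarLoss m lam L (w + s • (Pi.single j 1 : Fin L → ℝ)
        + t • (Pi.single k 1 : Fin L → ℝ))) 0) 0 =
      2 * (∏ i ∈ univ.erase k, w i) * (w k * ∏ i ∈ (univ.erase k).erase j, w i)
       - 2 * (m - ∏ i, w i) * ∏ i ∈ (univ.erase k).erase j, w i := by
  simp_rw [aux_deriv]
  have hj : j ∈ univ.erase k := mem_erase.2 ⟨hjk, mem_univ _⟩
  rw [← mul_prod_erase univ w (mem_univ k), ← mul_prod_erase _ w hj]
  set R := ∏ i ∈ (univ.erase k).erase j, w i with hR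
  have e : ∀ s : ℝ, ∏ i ∈ univ.erase k, (w + s • (Pi.single j 1 : Fin L → ℝ)) i
      = (w j + s) * R := by
    intro s
    rw [← mul_prod_erase _ _ hj]
    congr 1
    · simp
    · refine prod_congr rfl fun i hi => ?_
      have : i ≠ j := ne_of_mem_erase hi
      simp [this]
  have e2 : ∀ s : ℝ, (w + s • (Pi.single j 1 : Fin L → ℝ)) k = w k := by
    intro s; simp [hjk.symm]
  simp_rw [e, e2]
  have h0 := ((hasDerivAt_id (0:ℝ)).const_add (w j)).mul_const R
  have h1 := (((h0.const_mul (w k)).const_sub m).const_mul (-2)).mul h0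
  have h3 := h1.add_const (2 * (lam / L) * w k)
  refine h3.deriv.trans ?_
  simp
  ring

lemma aux_lin (a b : ℝ) (h : ∀ t : ℝ, 0 ≤ b * t + a * t ^ 2) : b = 0 := by
  have key : HasDerivAt (fun t : ℝ => b * t + a * t ^ 2) b 0 := by
    have := ((hasDerivAt_id (0:ℝ)).const_mul b).add (((hasDerivAt_id (0:ℝ)).pow 2).const_mul a)
    exact this.congr_deriv (by simp)
  have hm : IsLocalMin (fun t : ℝ => b * t + a * t ^ 2) 0 :=
    Filter.Eventually.of_forall fun t => by simpa using h t
  exact hm.hasDerivAt_eq_zero key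

open Finset in
lemma aux_crit (m lam : ℝ) (L : ℕ) (w : Fin L → ℝ)
    (hw : ∀ v, scalarLoss m lam L w ≤ scalarLoss m lam L v) (k : Fin L) :
    (m - ∏ i, w i) * ∏ i, w i = lam / L * w k ^ 2 := by
  have h : ∀ t : ℝ, _ := fun t => hw (w + t • (Pi.single k 1 : Fin L → ℝ))
  simp_rw [aux_loss, scalarLoss, ← mul_prod_erase univ w (mem_univ k)] at h
  rw [← mul_prod_erase univ w (mem_univ k)]
  set Q := ∏ i ∈ univ.erase k, w i
  have := aux_lin (Q ^ 2 + lam / L) (-2 * (m - w k * Q) * Q + 2 * (lam / L) * w k) (by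
    intro t
    have := h t
    nlinarith)
  linear_combination (-w k / 2) * this

open Finset in
lemma aux_shape (m lam : ℝ) (hlam : 0 < lam) (L : ℕ) (hL : 3 ≤ L) (i0 : Fin L) (w : Fin L → ℝ)
    (hw : ∀ v, scalarLoss m lam L w ≤ scalarLoss m lam L v) :
    (∀ k, |w k| = |w i0|) ∧ |∏ i, w i| = |w i0| ^ L ∧
    scalarLoss m lam L w = (|m| - |w i0| ^ L) ^ 2 + lam * |w i0| ^ 2 := by
  have hL0 : (0:ℝ) < L := by exact_mod_cast (by omega : 0 < L)
  have hc := aux_crit m lam L w hw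
  have habs : ∀ k, |w k| = |w i0| := by
    intro k
    have h := (hc k).symm.trans (hc i0)
    exact (sq_eq_sq_iff_abs_eq_abs _ _).1 (mul_left_cancel₀ (by positivity) h)
  have hP : |∏ i, w i| = |w i0| ^ L := by
    rw [abs_prod]; simp_rw [habs]; simp
  refine ⟨habs, hP, ?_⟩
  have hs : ∑ i, w i ^ 2 = L * |w i0| ^ 2 := by
    have : ∀ i, w i ^ 2 = |w i0| ^ 2 := fun i => by rw [← sq_abs, habs]
    simp_rw [this]; simp
  rw [scalarLoss, hs, ← hP]
  have hmP : 0 ≤ m * ∏ i, w i := by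
    have := hc i0
    have h2 : 0 ≤ lam / L * w i0 ^ 2 := by positivity
    nlinarith [sq_nonneg (∏ i, w i)]
  have h4 : |m| * |∏ i, w i| = m * ∏ i, w i := by rw [← abs_mul, abs_of_nonneg hmP]
  have h5 : lam / L * (L * |w i0| ^ 2) = lam * |w i0| ^ 2 := by
    field_simp
  rw [h5]
  nlinarith [sq_abs m, sq_abs (∏ i, w i)]

open Finset in
lemma aux_upper (m lam : ℝ) (L : ℕ) (hL : 3 ≤ L) (i0 : Fin L) (ρ : ℝ) :
    ∃ v, scalarLoss m lam L v = (|m| - ρ ^ L) ^ 2 + lam * ρ ^ 2 := by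
  have hL0 : (L:ℝ) ≠ 0 := by exact_mod_cast (by omega : L ≠ 0)
  obtain ⟨σ, hσ, hσm⟩ : ∃ σ : ℝ, σ ^ 2 = 1 ∧ m = σ * |m| := by
    rcases le_total 0 m with h | h
    · exact ⟨1, by norm_num, by rw [abs_of_nonneg h]; ring⟩
    · exact ⟨-1, by norm_num, by rw [abs_of_nonpos h]; ring⟩
  refine ⟨fun i => ρ * (if i = i0 then σ else 1), ?_⟩
  have h1 : ∏ i : Fin L, (ρ * (if i = i0 then σ else 1)) = ρ ^ L * σ := by
    rw [prod_mul_distrib]; simp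
  have h2 : ∑ i : Fin L, (ρ * (if i = i0 then σ else 1)) ^ 2 = L * ρ ^ 2 := by
    have : ∀ i : Fin L, (ρ * (if i = i0 then σ else 1)) ^ 2 = ρ ^ 2 := by
      intro i; split_ifs
      · rw [mul_pow, hσ, mul_one]
      · simp
    simp_rw [this]; simp
  rw [scalarLoss, h1, h2]
  have h5 : lam / L * (L * ρ ^ 2) = lam * ρ ^ 2 := by field_simp
  rw [h5]
  have : (m - ρ ^ L * σ) ^ 2 = σ ^ 2 * (|m| - ρ ^ L) ^ 2 := by
    conv_lhs => rw [hσm]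
    ring
  rw [this, hσ, one_mul]

lemma aux_thresh (L : ℕ) (hL : 3 ≤ L) (lam : ℝ) (hlam : 0 < lam) (M q τ : ℝ)
    (hq : q = 2 / L)
    (hτ : τ = (1 - q / 2) * lam ^ (1 / (2 - q)) * (1 - q) ^ ((q - 1) / (2 - q)))
    (hm : τ < M) : ∃ ρ : ℝ, (M - ρ ^ L) ^ 2 + lam * ρ ^ 2 < M ^ 2 := by
  have hL3 : (3:ℝ) ≤ L := by exact_mod_cast hL
  have hq1 : 0 < 1 - q := by
    rw [hq, sub_pos, div_lt_one (by linarith)]; linarith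
  have hqL : q * L = 2 := by rw [hq]; field_simp
  have h2q : 0 < 2 - q := by linarith
  have hB : 0 < lam * (1 - q) := by positivity
  have hA : ((lam * (1 - q)) ^ (1 / (2 * (L:ℝ) - 2))) ^ L = (lam * (1 - q)) ^ (1 / (2 - q)) := by
    rw [← Real.rpow_natCast, ← Real.rpow_mul hB.le]
    congr 1
    have : 2 * (L:ℝ) - 2 ≠ 0 := by linarith
    rw [div_mul_eq_mul_div, div_eq_div_iff this h2q.ne']
    linarith
  have hC : ((lam * (1 - q)) ^ (1 / (2 * (L:ℝ) - 2))) ^ (2 * L - 2) = lam * (1 - q) := by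
    rw [← Real.rpow_natCast, ← Real.rpow_mul hB.le]
    have : 2 * (L:ℝ) - 2 ≠ 0 := by linarith
    have h : ((2 * L - 2 : ℕ) : ℝ) = 2 * (L:ℝ) - 2 := by
      rw [Nat.cast_sub (by omega)]; push_cast; ring
    rw [h, one_div_mul_cancel this, Real.rpow_one]
  set ρ := (lam * (1 - q)) ^ (1 / (2 * (L:ℝ) - 2)) with hρ
  have hρ0 : 0 < ρ := Real.rpow_pos_of_pos hB _
  refine ⟨ρ, ?_⟩
  have hτ2 : τ * (1 - q) = (1 - q / 2) * ρ ^ L := by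
    rw [hτ, hA, Real.mul_rpow hlam.le hq1.le]
    have : (1 - q) ^ (1 / (2 - q)) = (1 - q) ^ ((q - 1) / (2 - q)) * (1 - q) := by
      rw [← Real.rpow_add_one hq1.ne']
      congr 1
      field_simp
      ring
    rw [this]; ring
  have hsq : (ρ ^ L) ^ 2 = lam * (1 - q) * ρ ^ 2 := by
    rw [← hC, ← pow_mul, ← pow_add]; congr 1; omega
  have hA0 : 0 < ρ ^ L := by positivity
  have key : (1 - q) * ((M - ρ ^ L) ^ 2 + lam * ρ ^ 2 - M ^ 2)
      = -(2 * (1 - q) * ρ ^ L * (M - τ)) := by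
    linear_combination (-1) * hsq - 2 * ρ ^ L * hτ2
  have : 0 < 2 * (1 - q) * ρ ^ L * (M - τ) := by
    have := sub_pos.2 hm; positivity
  have h := neg_of_mul_neg_right (a := 1 - q) (b := (M - ρ ^ L) ^ 2 + lam * ρ ^ 2 - M ^ 2) (by rw [key]; linarith) hq1.le
  linarith

lemma aux_unique (L : ℕ) (hL : 3 ≤ L) (lam : ℝ) (hlam : 0 < lam) (M a b : ℝ)
    (ha : 0 < a) (hb : 0 < b)
    (hamin : ∀ ρ : ℝ, (M - a ^ L) ^ 2 + lam * a ^ 2 ≤ (M - ρ ^ L) ^ 2 + lam * ρ ^ 2)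
    (hbmin : ∀ ρ : ℝ, (M - b ^ L) ^ 2 + lam * b ^ 2 ≤ (M - ρ ^ L) ^ 2 + lam * ρ ^ 2) :
    a = b := by
  by_contra hab
  have hD : 0 ≤ M ^ 2 - ((M - a ^ L) ^ 2 + lam * a ^ 2) := by
    have := hamin 0
    rw [zero_pow (by omega : L ≠ 0)] at this
    linarith
  have heq := le_antisymm (hamin b) (hbmin a)
  set c := (M - a ^ L) ^ 2 + lam * a ^ 2 with hc
  have hG : StrictConvexOn ℝ (Set.Ioi 0) (fun x : ℝ => x ^ (L:ℤ) +
      ((M ^ 2 - c) * x ^ (-(L:ℤ)) + lam * x ^ (2 - (L:ℤ)))) := by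
    refine (strictConvexOn_zpow (by omega) (by omega)).add_convexOn (ConvexOn.add ?_ ?_)
    · exact (convexOn_zpow _).smul hD
    · exact (convexOn_zpow _).smul hlam.le
  have hval : ∀ x : ℝ, 0 < x → x ^ L * (x ^ (L:ℤ) +
      ((M ^ 2 - c) * x ^ (-(L:ℤ)) + lam * x ^ (2 - (L:ℤ))) - 2 * M)
      = (M - x ^ L) ^ 2 + lam * x ^ 2 - c := by
    intro x hx
    rw [zpow_neg, zpow_sub₀ hx.ne', zpow_natCast]
    have : x ^ L ≠ 0 := by positivity
    have e : x ^ (2:ℤ) = x ^ 2 := by norm_cast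
    rw [e]
    field_simp
    ring
  have hlt := hG.2 ha hb hab (by norm_num : (0:ℝ) < 1/2) (by norm_num : (0:ℝ) < 1/2)
    (by norm_num)
  have hz : ∀ x : ℝ, 0 < x → (M - x ^ L) ^ 2 + lam * x ^ 2 - c = 0 → x ^ (L:ℤ) +
      ((M ^ 2 - c) * x ^ (-(L:ℤ)) + lam * x ^ (2 - (L:ℤ))) = 2 * M := by
    intro x hx h
    rw [← hval x hx] at h
    have : x ^ L ≠ 0 := by positivity
    have := (mul_eq_zero.1 h).resolve_left this
    linarith
  have hmid : 0 < (1/2 : ℝ) • a + (1/2 : ℝ) • b := by simp only [smul_eq_mul]; positivity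
  set z := (1/2 : ℝ) • a + (1/2 : ℝ) • b
  simp only [hz a ha (by linarith), hz b hb (by linarith)] at hlt
  have h1 := hval z hmid
  have h2 := hamin z
  have h3 : 0 < z ^ L := by positivity
  simp only [smul_eq_mul] at hlt
  have : z ^ L * (z ^ (L:ℤ) +
      ((M ^ 2 - c) * z ^ (-(L:ℤ)) + lam * z ^ (2 - (L:ℤ))) - 2 * M) < 0 :=
    mul_neg_of_pos_of_neg h3 (by linarith)
  linarith

open Finset in
lemma aux_charpoly (L : ℕ) (hL : 3 ≤ L) (α β : ℝ) (s : Fin L → ℝ) (hs : ∀ i, s i * s i = 1)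
    (H : Matrix (Fin L) (Fin L) ℝ)
    (hH : ∀ j k, H j k = β * s j * s k + if j = k then α else 0) :
    H.charpoly = (Polynomial.X - Polynomial.C α) ^ (L - 1) *
      (Polynomial.X - Polynomial.C (L * β + α)) := by
  have e : H = Matrix.vecMulVec (fun i => β * s i) s - Matrix.scalar (Fin L) (-α) := by
    ext j k
    rw [hH]
    simp [Matrix.vecMulVec_apply, Matrix.diagonal_apply]
    split_ifs <;> simp
  have d : (fun i => β * s i) ⬝ᵥ s = L * β := by
    simp only [dotProduct, mul_assoc, hs]; simp
  rw [e, Matrix.charpoly_sub_scalar, Matrix.charpoly_vecMulVec, d]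
  obtain ⟨n, rfl⟩ : ∃ n, L = n + 1 := ⟨L - 1, by omega⟩
  simp [Polynomial.smul_eq_C_mul, pow_succ]
  ring

/-- For `L ≥ 3`, `λ > 0`, `q = 2/L`, and `|m| > τ` with
`τ = (1 − q/2)·λ^{1/(2−q)}·(1 − q)^{(q−1)/(2−q)}`: the value `w = |w*_1|` is
the same for all global minimizers `w*` of `𝓛`, and at any global minimizer
the Hessian of `𝓛` has characteristic polynomial
`(x − 4λ/L)^{L−1}·(x − (2L·w^{2L−2} + 4λ/L − 2λ))`, i.e. eigenvalue `4λ/L`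
with multiplicity `L − 1` and eigenvalue `2L·w^{2L−2} + 4λ/L − 2λ` with
multiplicity `1`; so the Hessian spectrum is constant across global minimizers. -/
theorem stmt4 (L : ℕ) (hL : 3 ≤ L) (lam : ℝ) (hlam : 0 < lam) (m q τ : ℝ)
    (hq : q = 2 / L)
    (hτ : τ = (1 - q / 2) * lam ^ (1 / (2 - q)) * (1 - q) ^ ((q - 1) / (2 - q)))
    (hm : τ < |m|) :
    (∀ w₁ w₂ : Fin L → ℝ,
      (∀ w : Fin L → ℝ, scalarLoss m lam L w₁ ≤ scalarLoss m lam L w) →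
      (∀ w : Fin L → ℝ, scalarLoss m lam L w₂ ≤ scalarLoss m lam L w) →
      |w₁ ⟨0, by omega⟩| = |w₂ ⟨0, by omega⟩|) ∧
    (∀ wstar : Fin L → ℝ,
      (∀ w : Fin L → ℝ, scalarLoss m lam L wstar ≤ scalarLoss m lam L w) →
      (Matrix.of fun j k : Fin L =>
          deriv (fun s : ℝ => deriv (fun t : ℝ =>
            scalarLoss m lam L (wstar + s • (Pi.single j 1 : Fin L → ℝ) + t • (Pi.single k 1 : Fin L → ℝ))) 0) 0).charpoly
        = (Polynomial.X - Polynomial.C (4 * lam / L)) ^ (L - 1) *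
          (Polynomial.X - Polynomial.C
            (2 * L * |wstar ⟨0, by omega⟩| ^ (2 * L - 2) + 4 * lam / L - 2 * lam))) := by
  have hL0 : (0:ℝ) < L := by exact_mod_cast (by omega : 0 < L)
  have hmin : ∀ w : Fin L → ℝ, (∀ v, scalarLoss m lam L w ≤ scalarLoss m lam L v) →
      ∀ ρ : ℝ, (|m| - |w ⟨0, by omega⟩| ^ L) ^ 2 + lam * |w ⟨0, by omega⟩| ^ 2
        ≤ (|m| - ρ ^ L) ^ 2 + lam * ρ ^ 2 := by
    intro w hw ρ
    obtain ⟨v, hv⟩ := aux_upper m lam L hL ⟨0, by omega⟩ ρ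
    rw [← hv, ← (aux_shape m lam hlam L hL ⟨0, by omega⟩ w hw).2.2]
    exact hw v
  have hpos : ∀ w : Fin L → ℝ, (∀ v, scalarLoss m lam L w ≤ scalarLoss m lam L v) →
      0 < |w ⟨0, by omega⟩| := by
    intro w hw
    refine (abs_nonneg _).lt_of_ne' fun h0 => ?_
    obtain ⟨ρ, hρ⟩ := aux_thresh L hL lam hlam |m| q τ hq hτ hm
    have := hmin w hw ρ
    rw [h0, zero_pow (by omega : L ≠ 0)] at this
    linarith
  refine ⟨fun w₁ w₂ h₁ h₂ => aux_unique L hL lam hlam |m| _ _ (hpos w₁ h₁) (hpos w₂ h₂)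
    (hmin w₁ h₁) (hmin w₂ h₂), ?_⟩
  intro w hw
  obtain ⟨habs, hP, -⟩ := aux_shape m lam hlam L hL ⟨0, by omega⟩ w hw
  have hr := hpos w hw
  have hc := aux_crit m lam L w hw
  set r := |w ⟨0, by omega⟩| with hrdef
  have hne : ∀ k, w k ≠ 0 := fun k => abs_pos.1 (by rw [habs]; exact hr)
  have hsq : ∀ k, w k ^ 2 = r ^ 2 := fun k => by rw [← sq_abs, habs]
  have hP2 : (∏ i, w i) ^ 2 = r ^ (2 * L - 2) * r ^ 2 := by
    rw [← sq_abs, hP, ← pow_mul, ← pow_add]; congr 1; omega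
  rw [aux_charpoly L hL (4 * lam / L) (2 * r ^ (2 * L - 2) - 2 * lam / L) (fun i => w i / r)]
  · congr 3
    field_simp
    ring
  · intro i
    rw [div_mul_div_comm, ← sq, ← sq, hsq, div_self (by positivity)]
  · intro j k
    rw [Matrix.of_apply]
    by_cases hjk : j = k
    · subst hjk
      rw [aux_hess_diag, if_pos rfl]
      have h1 := Finset.mul_prod_erase Finset.univ w (Finset.mem_univ j)
      set Q := ∏ i ∈ Finset.univ.erase j, w i
      have hQ : Q ^ 2 = r ^ (2 * L - 2) := by
        rw [← h1, mul_pow, hsq] at hP2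
        have : r ^ 2 ≠ 0 := by positivity
        apply mul_left_cancel₀ this
        linarith
      rw [hQ, mul_assoc, div_mul_div_comm, ← sq, ← sq, hsq, div_self (by positivity)]
      ring
    · rw [aux_hess_off _ _ _ _ _ _ hjk, if_neg hjk]
      have h1 := Finset.mul_prod_erase Finset.univ w (Finset.mem_univ k)
      have h2 := Finset.mul_prod_erase (Finset.univ.erase k) w
        (Finset.mem_erase.2 ⟨hjk, Finset.mem_univ j⟩)
      rw [← h2] at h1 ⊢
      have hck := hc k
      set P := ∏ i, w i
      set R := ∏ i ∈ (Finset.univ.erase k).erase j, w i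
      have hj := hsq j
      have hk := hsq k
      rw [hk] at hck
      have hw2 : w j * w k ≠ 0 := mul_ne_zero (hne j) (hne k)
      have hr2 : r ^ 2 ≠ 0 := by positivity
      apply mul_left_cancel₀ hw2
      have e1 : w j * w k * ((2 * r ^ (2 * L - 2) - 2 * lam / L) * (w j / r) * (w k / r) + 0)
          = (2 * r ^ (2 * L - 2) - 2 * lam / L) * r ^ 2 := by
        have : w j * w k * ((2 * r ^ (2 * L - 2) - 2 * lam / L) * (w j / r) * (w k / r) + 0)
          = (2 * r ^ (2 * L - 2) - 2 * lam / L) * (w j ^ 2 * w k ^ 2 / r ^ 2) := by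
          field_simp
          try ring
        rw [this, hj, hk, mul_div_cancel_right₀ _ hr2]
      rw [e1]
      have e2 : w j * w k * (2 * (w j * R) * (w k * R) - 2 * (m - P) * R)
          = 2 * P ^ 2 - 2 * ((m - P) * P) := by
        rw [← h1]; ring
      rw [e2, hck, hP2]
      ring
end

section
/- Let L ≥ 1 be an integer, λ > 0, and let M♮ ∈ ℝ^{d_L × d_0}. Suppose the dimensions d_0, d_1, …, d_L satisfy min_{1 ≤ i ≤ L−1} d_i ≥ min{d_0, d_L}. Consider the ℓ²-regularized deep matrix factorization objective 𝓛(W_1, …, W_L) := ‖M♮ − W_L·W_{L−1}···W_1‖_F² + (λ/L)·Σ_{i=1}^L ‖W_i‖_F², where W_i ∈ ℝ^{d_i × d_{i−1}}, and the Schatten-regularized objective 𝓛_{M♮}(M) := ‖M♮ − M‖_F² + λ·‖M‖_{S^{2/L}}^{2/L} for M ∈ ℝ^{d_L × d_0}. Then: (i) for every global minimizer (W*_1, …, W*_L) of 𝓛, the product W*_L···W*_1 is a global minimizer of 𝓛_{M♮}; and (ii) for every global minimizer M* of 𝓛_{M♮}, there exists a global minimizer (W*_1, …, W*_L) of 𝓛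 with W*_L···W*_1 = M*. -/
open Matrix

/-- The `i`-th largest singular value of a real matrix `A` (`0`-indexed),
i.e. the non-increasing rearrangement of the square roots of the
eigenvalues of the positive semidefinite matrix `Aᵀ A`. -/
noncomputable def singularValue {m n : ℕ} (A : Matrix (Fin m) (Fin n) ℝ) (i : Fin (min m n)) : ℝ :=
  let ev : Fin n → ℝ := fun j => Real.sqrt ((Matrix.isHermitian_conjTranspose_mul_self A).eigenvalues j)
  (ev ∘ Tuple.sort ev) ((Fin.castLE (Nat.min_le_right m n) i).rev)

/-- Frobenius norm of a real matrix. -/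
noncomputable def frobNorm {m n : ℕ} (A : Matrix (Fin m) (Fin n) ℝ) : ℝ :=
  Real.sqrt (∑ i, ∑ j, (A i j) ^ 2)

/-- `‖A‖_{S^q}^q = ∑_{i=1}^{min m n} σ_i(A)^q`. -/
noncomputable def schattenPow {m n : ℕ} (A : Matrix (Fin m) (Fin n) ℝ) (q : ℝ) : ℝ :=
  ∑ i : Fin (min m n), (singularValue A i) ^ q

/-- Schatten-`q` quasi-norm `‖A‖_{S^q} = (∑ σ_i(A)^q)^{1/q}`. -/
noncomputable def schattenNorm {m n : ℕ} (A : Matrix (Fin m) (Fin n) ℝ) (q : ℝ) : ℝ :=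
  (schattenPow A q) ^ (1 / q)

/-- `chainProd d W L = W_{L-1} * ⋯ * W_1 * W_0` (the end-to-end product of the
first `L` layers, `W_i : ℝ^{d_{i+1} × d_i}`). -/
noncomputable def chainProd (d : ℕ → ℕ) (W : ∀ i : ℕ, Matrix (Fin (d (i + 1))) (Fin (d i)) ℝ) :
    (L : ℕ) → Matrix (Fin (d L)) (Fin (d 0)) ℝ
  | 0 => 1
  | (L + 1) => W L * chainProd d W L

/-- The ℓ²-regularized deep matrix factorization objective
`𝓛(W) = ‖M♮ − W_L ⋯ W_1‖_F² + (λ/L) ∑ᵢ ‖W_i‖_F²`. -/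
noncomputable def deepLoss (L : ℕ) (lam : ℝ) (d : ℕ → ℕ)
    (Mnat : Matrix (Fin (d L)) (Fin (d 0)) ℝ)
    (W : ∀ i : ℕ, Matrix (Fin (d (i + 1))) (Fin (d i)) ℝ) : ℝ :=
  frobNorm (Mnat - chainProd d W L) ^ 2 + (lam / L) * ∑ i : Fin L, frobNorm (W i.1) ^ 2

/-- The Schatten-regularized objective
`𝓛_{M♮}(M) = ‖M♮ − M‖_F² + λ‖M‖_{S^{2/L}}^{2/L}`. -/
noncomputable def schattenLoss (L : ℕ) (lam : ℝ) {m n : ℕ}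
    (Mnat M : Matrix (Fin m) (Fin n) ℝ) : ℝ :=
  frobNorm (Mnat - M) ^ 2 + lam * schattenPow M (2 / L)

lemma sum_sub_eq {ι : Type*} [Fintype ι] (p : ι → Prop) [Fintype {k // p k}] (f : ι → ℝ)
    (h : ∀ k, ¬ p k → f k = 0) : ∑ k : {k // p k}, f k = ∑ k, f k := by
  classical
  rw [← Finset.sum_filter_of_ne (p := p) (fun k _ hk => by_contra fun hp => hk (h k hp))]
  exact (Finset.sum_subtype _ (by simp) f).symm

open InnerProductSpace in
lemma gs_norm_le {E F : Type*} [NormedAddCommGroup E] [InnerProductSpace ℝ E]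
    [NormedAddCommGroup F] [InnerProductSpace ℝ F] {n : ℕ} (T : E →ₗ[ℝ] F) (x : Fin n → E)
    (k : Fin n) : ‖gramSchmidt ℝ (fun j => T (x j)) k‖ ≤ ‖T (gramSchmidt ℝ x k)‖ := by
  set y : Fin n → F := fun j => T (x j) with hy
  have h1 : ∀ z ∈ Submodule.span ℝ (y '' Set.Iio k), inner ℝ (gramSchmidt ℝ y k) z = 0 := by
    intro z hz
    induction hz using Submodule.span_induction with
    | mem z hz =>
      obtain ⟨j, hj, rfl⟩ := hz
      exact gramSchmidt_inv_triangular ℝ y hj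
    | zero => simp
    | add a b _ _ ha hb => rw [inner_add_right, ha, hb, add_zero]
    | smul c a _ ha => rw [inner_smul_right, ha, mul_zero]
  have hmem : ∀ {G : Type _} [NormedAddCommGroup G] [InnerProductSpace ℝ G] (f : Fin n → G),
      f k - gramSchmidt ℝ f k ∈ Submodule.span ℝ (f '' Set.Iio k) := by
    intro G _ _ f
    rw [← span_gramSchmidt_Iio]
    have := gramSchmidt_def'' ℝ f k
    rw [sub_eq_of_eq_add' this]
    refine Submodule.sum_mem _ fun i hi => Submodule.smul_mem _ _ (Submodule.subset_span ⟨i, ?_, rfl⟩)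
    simpa using hi
  have h2 := hmem y
  have h3 : T (x k - gramSchmidt ℝ x k) ∈ Submodule.span ℝ (y '' Set.Iio k) := by
    have hx : x k - gramSchmidt ℝ x k ∈ Submodule.span ℝ (x '' Set.Iio k) := by
      rw [← span_gramSchmidt_Iio]
      rw [sub_eq_of_eq_add' (gramSchmidt_def'' ℝ x k)]
      refine Submodule.sum_mem _ fun i hi =>
        Submodule.smul_mem _ _ (Submodule.subset_span ⟨i, ?_, rfl⟩)
      simpa using hi
    have := Submodule.mem_map_of_mem (f := T) hx
    rw [Submodule.map_span, ← Set.image_comp] at this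
    exact this
  have h4 := h1 _ (Submodule.sub_mem _ h2 h3)
  have h5 : T (gramSchmidt ℝ x k) = gramSchmidt ℝ y k +
      ((y k - gramSchmidt ℝ y k) - T (x k - gramSchmidt ℝ x k)) := by
    simp only [hy, map_sub]; abel
  have h6 := norm_add_sq_eq_norm_sq_add_norm_sq_real h4
  rw [← h5] at h6
  nlinarith [norm_nonneg (T (gramSchmidt ℝ x k)), norm_nonneg (gramSchmidt ℝ y k),
    mul_self_nonneg ‖(y k - gramSchmidt ℝ y k) - T (x k - gramSchmidt ℝ x k)‖]

lemma frob_sq {m n : ℕ} (A : Matrix (Fin m) (Fin n) ℝ) :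
    frobNorm A ^ 2 = ∑ i, ∑ j, (A i j) ^ 2 := by
  unfold frobNorm
  exact Real.sq_sqrt (Finset.sum_nonneg fun i _ => Finset.sum_nonneg fun j _ => sq_nonneg _)

open InnerProductSpace in
lemma bessel_frob {m n N : ℕ} (A : Matrix (Fin m) (Fin n) ℝ)
    (x : Fin N → EuclideanSpace ℝ (Fin n)) :
    ∑ k, ‖A.toEuclideanLin (gramSchmidtNormed ℝ x k)‖ ^ 2 ≤ frobNorm A ^ 2 := by
  have key : ∀ w : EuclideanSpace ℝ (Fin n),
      ∑ k, (inner ℝ (gramSchmidtNormed ℝ x k) w) ^ 2 ≤ ‖w‖ ^ 2 := by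
    intro w
    classical
    have h := (gramSchmidtNormed_orthonormal' (𝕜 := ℝ) x).sum_inner_products_le w
      (s := Finset.univ)
    refine le_trans (le_of_eq ?_) h
    simp only [Real.norm_eq_abs, sq_abs]
    symm
    exact sum_sub_eq (fun k => gramSchmidtNormed ℝ x k ≠ 0)
      (fun k => (inner ℝ (gramSchmidtNormed ℝ x k) w) ^ 2)
      (fun k hk => by simp only [ne_eq, not_not] at hk; simp [hk])
  rw [frob_sq]
  simp_rw [EuclideanSpace.norm_sq_eq]
  rw [Finset.sum_comm]
  refine Finset.sum_le_sum fun i _ => ?_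
  have := key (WithLp.toLp 2 (A i))
  rw [EuclideanSpace.norm_sq_eq] at this
  refine le_trans (le_of_eq ?_) (this.trans (le_of_eq ?_))
  · refine Finset.sum_congr rfl fun k _ => ?_
    simp [Matrix.toLpLin_apply, PiLp.inner_apply, Matrix.mulVec, dotProduct]
  · simp

/-- eigenvalues -/
noncomputable def evs {m n : ℕ} (A : Matrix (Fin m) (Fin n) ℝ) : Fin n → ℝ :=
  (Matrix.isHermitian_conjTranspose_mul_self A).eigenvalues

lemma evs_nonneg {m n : ℕ} (A : Matrix (Fin m) (Fin n) ℝ) (j : Fin n) : 0 ≤ evs A j :=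
  (Matrix.posSemidef_conjTranspose_mul_self A).eigenvalues_nonneg j

noncomputable def eU {m n : ℕ} (A : Matrix (Fin m) (Fin n) ℝ) : Matrix (Fin n) (Fin n) ℝ :=
  ((Matrix.isHermitian_conjTranspose_mul_self A).eigenvectorUnitary : Matrix (Fin n) (Fin n) ℝ)

lemma eU_tmul {m n : ℕ} (A : Matrix (Fin m) (Fin n) ℝ) : (eU A)ᵀ * eU A = 1 := by
  have := Unitary.coe_star_mul_self (Matrix.isHermitian_conjTranspose_mul_self A).eigenvectorUnitary
  rwa [Matrix.star_eq_conjTranspose, Matrix.conjTranspose_eq_transpose_of_trivial] at this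

lemma eU_mult {m n : ℕ} (A : Matrix (Fin m) (Fin n) ℝ) : eU A * (eU A)ᵀ = 1 :=
  mul_eq_one_comm.mp (eU_tmul A)

lemma eU_gram {m n : ℕ} (A : Matrix (Fin m) (Fin n) ℝ) :
    (A * eU A)ᵀ * (A * eU A) = Matrix.diagonal (evs A) := by
  have := (Matrix.isHermitian_conjTranspose_mul_self A).conjStarAlgAut_star_eigenvectorUnitary
  rw [Unitary.conjStarAlgAut_star_apply, Matrix.star_eq_conjTranspose] at this
  simp only [Matrix.conjTranspose_eq_transpose_of_trivial] at this
  rw [Matrix.transpose_mul, Matrix.mul_assoc, ← Matrix.mul_assoc Aᵀ, ← Matrix.mul_assoc]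
  exact this

lemma schattenPow_le_sum {m n : ℕ} (A : Matrix (Fin m) (Fin n) ℝ) (q : ℝ) :
    schattenPow A q ≤ ∑ k, (Real.sqrt (evs A k)) ^ q := by
  unfold schattenPow singularValue
  simp only [Function.comp]
  set s := Tuple.sort fun j => Real.sqrt ((Matrix.isHermitian_conjTranspose_mul_self A).eigenvalues j)
  have hinj : Function.Injective
      (fun i : Fin (min m n) => s ((Fin.castLE (Nat.min_le_right m n) i).rev)) :=
    s.injective.comp (Fin.rev_injective.comp (Fin.castLE_injective _))
  have := Finset.sum_map (Finset.univ) ⟨_, hinj⟩ (fun k => (Real.sqrt (evs A k)) ^ q)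
  change ∑ i : Fin (min m n), (fun k => (Real.sqrt (evs A k)) ^ q)
    ((⟨_, hinj⟩ : Fin (min m n) ↪ Fin n) i) ≤ _
  rw [← this]
  exact Finset.sum_le_sum_of_subset_of_nonneg (Finset.subset_univ _)
    fun i _ _ => Real.rpow_nonneg (Real.sqrt_nonneg _) _

lemma card_ne {m n : ℕ} (A : Matrix (Fin m) (Fin n) ℝ) :
    Fintype.card {k // evs A k ≠ 0} ≤ min m n := by
  have h := (Matrix.isHermitian_conjTranspose_mul_self A).rank_eq_card_non_zero_eigs
  rw [Matrix.rank_conjTranspose_mul_self] at h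
  have h1 := A.rank_le_height
  have h2 := A.rank_le_width
  unfold evs
  rw [← h]; omega

lemma sum_le_schattenPow {m n : ℕ} (A : Matrix (Fin m) (Fin n) ℝ) (q : ℝ) :
    ∑ k : {k // evs A k ≠ 0}, (Real.sqrt (evs A k)) ^ q ≤ schattenPow A q := by
  have hc := card_ne A
  unfold schattenPow singularValue
  simp only [Function.comp]
  set ev : Fin n → ℝ := fun j =>
    Real.sqrt ((Matrix.isHermitian_conjTranspose_mul_self A).eigenvalues j) with hev
  set s := Tuple.sort ev with hs
  have hmono : Monotone (ev ∘ s) := Tuple.monotone_sort ev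
  have hpos : ∀ j, evs A j ≠ 0 ↔ 0 < ev j := fun j => by
    have := evs_nonneg A j
    rw [hev]; simp only [Real.sqrt_pos]
    exact ⟨fun h => lt_of_le_of_ne this h.symm, fun h => h.ne'⟩
  have key : ∀ k : {k // evs A k ≠ 0}, ((s.symm k).rev : ℕ) < min m n := by
    intro k
    have h1 : ∀ p : Fin n, s.symm k ≤ p → evs A (s p) ≠ 0 := by
      intro p hp
      rw [hpos]
      have h := hmono hp
      simp only [Function.comp, Equiv.apply_symm_apply] at h
      exact lt_of_lt_of_le ((hpos _).1 k.2) h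
    have h2 : Fintype.card (Set.Ici (s.symm k : Fin n)) ≤ Fintype.card {k // evs A k ≠ 0} :=
      Fintype.card_le_of_injective (fun p => ⟨s p.1, h1 p.1 p.2⟩) (by
        intro a b hab
        simpa [Subtype.ext_iff] using hab)
    have h3 : Fintype.card (Set.Ici (s.symm k : Fin n)) = n - (s.symm k : Fin n) := by
      simp 
    rw [Fin.val_rev]
    have := (s.symm k : Fin n).2
    rw [h3] at h2
    omega
  let e : {k // evs A k ≠ 0} ↪ Fin (min m n) := ⟨fun k => ⟨_, key k⟩, by
    intro a b hab
    simp only [Fin.mk.injEq] at hab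
    exact Subtype.ext (s.symm.injective (Fin.rev_injective (Fin.ext hab)))⟩
  have he : ∀ k : {k // evs A k ≠ 0}, Real.sqrt (evs A k) =
      ev (s ((Fin.castLE (Nat.min_le_right m n) (e k)).rev)) := by
    intro k
    have : (Fin.castLE (Nat.min_le_right m n) (e k)).rev = s.symm k := by
      rw [Fin.rev_eq_iff]; rfl
    rw [this, Equiv.apply_symm_apply]; rfl
  simp_rw [he]
  have := Finset.sum_map Finset.univ e
    (fun i => ev (s ((Fin.castLE (Nat.min_le_right m n) i).rev)) ^ q)
  rw [← this]
  exact Finset.sum_le_sum_of_subset_of_nonneg (Finset.subset_univ _)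
    fun i _ _ => Real.rpow_nonneg (Real.sqrt_nonneg _) _

open InnerProductSpace in
lemma partA (L : ℕ) (hL : 1 ≤ L) (d : ℕ → ℕ)
    (W : ∀ i : ℕ, Matrix (Fin (d (i + 1))) (Fin (d i)) ℝ) :
    schattenPow (chainProd d W L) (2 / L) ≤ (1 / L) * ∑ i : Fin L, frobNorm (W i.1) ^ 2 := by
  refine (schattenPow_le_sum _ _).trans ?_
  set M := chainProd d W L with hM
  let v : Fin (d 0) → EuclideanSpace ℝ (Fin (d 0)) := fun k => WithLp.toLp 2 (fun i => eU M i k)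
  let x : ∀ j : ℕ, Fin (d 0) → EuclideanSpace ℝ (Fin (d j)) :=
    fun j k => (chainProd d W j).toEuclideanLin (v k)
  let ρ : ℕ → Fin (d 0) → ℝ := fun j k => ‖(W j).toEuclideanLin (gramSchmidtNormed ℝ (x j) k)‖
  have hx : ∀ j, x (j+1) = fun k => (W j).toEuclideanLin (x j k) := by
    intro j; funext k
    simp [x, chainProd, Matrix.toLpLin_apply]
  have step : ∀ j k, ‖gramSchmidt ℝ (x (j+1)) k‖ ≤ ρ j k * ‖gramSchmidt ℝ (x j) k‖ := by
    intro j k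
    rw [hx]
    refine (gs_norm_le _ _ _).trans (le_of_eq ?_)
    have : gramSchmidt ℝ (x j) k = ‖gramSchmidt ℝ (x j) k‖ • gramSchmidtNormed ℝ (x j) k := by
      by_cases h : gramSchmidt ℝ (x j) k = 0
      · simp [h]
      · have : ‖gramSchmidt ℝ (x j) k‖ ≠ 0 := norm_ne_zero_iff.2 h
        simp only [gramSchmidtNormed, smul_smul]
        simp [this]
    conv_lhs => rw [this]
    rw [map_smul, norm_smul, norm_norm, mul_comm]
  have hin : ∀ {a : ℕ} (B : Matrix (Fin a) (Fin (d 0)) ℝ) k l,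
      inner ℝ (B.toEuclideanLin (v k)) (B.toEuclideanLin (v l)) =
        ((B * eU M)ᵀ * (B * eU M)) k l := by
    intro a B k l
    simp [v, Matrix.toLpLin_apply, PiLp.inner_apply, Matrix.mul_apply, Matrix.mulVec, dotProduct,
      mul_comm]
  have hgs : ∀ j (D : Fin (d 0) → ℝ), ((chainProd d W j * eU M)ᵀ * (chainProd d W j * eU M)) =
      Matrix.diagonal D → ∀ k, ‖gramSchmidt ℝ (x j) k‖ = Real.sqrt (D k) := by
    intro j D h k
    rw [gramSchmidt_of_orthogonal]
    · rw [norm_eq_sqrt_real_inner, hin, h, Matrix.diagonal_apply_eq]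
    · intro a b hab

      rw [hin, h, Matrix.diagonal_apply_ne _ hab]
  have h0 : ∀ k, ‖gramSchmidt ℝ (x 0) k‖ = 1 := by
    intro k
    rw [hgs 0 (fun _ => 1) ?_ k, Real.sqrt_one]
    simp [chainProd, eU_tmul]
  have hLn : ∀ k, ‖gramSchmidt ℝ (x L) k‖ = Real.sqrt (evs M k) := hgs L _ (eU_gram M)
  have hρ : ∀ j k, 0 ≤ ρ j k := fun _ _ => norm_nonneg _
  have hprod : ∀ j k, ‖gramSchmidt ℝ (x j) k‖ ≤ ∏ i ∈ Finset.range j, ρ i k := by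
    intro j k
    induction j with
    | zero => simp [h0]
    | succ j ih =>
      rw [Finset.prod_range_succ, mul_comm]
      exact (step j k).trans (mul_le_mul_of_nonneg_left ih (hρ _ _))
  have hL0 : (0:ℝ) < L := by exact_mod_cast hL
  have hk : ∀ k, Real.sqrt (evs M k) ^ (2 / L : ℝ) ≤ ∑ i ∈ Finset.range L, (1 / L : ℝ) * ρ i k ^ 2 := by
    intro k
    rw [← hLn]
    have h1 := Real.rpow_le_rpow (norm_nonneg _) (hprod L k) (show (0:ℝ) ≤ 2 / L by positivity)
    refine h1.trans ?_
    have h2 := Real.geom_mean_le_arith_mean_weighted (Finset.range L) (fun _ => (1 / L : ℝ))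
      (fun i => ρ i k ^ 2) (fun _ _ => by positivity) (by simp [hL0.ne']) (fun _ _ => sq_nonneg _)
    refine le_trans (le_of_eq ?_) h2
    rw [← Real.finsetProd_rpow _ _ (fun i _ => hρ i k)]
    refine Finset.prod_congr rfl fun i _ => ?_
    rw [← Real.rpow_natCast, ← Real.rpow_mul (hρ i k)]
    congr 1; push_cast; ring
  refine (Finset.sum_le_sum fun k _ => hk k).trans ?_
  rw [Finset.sum_comm, Finset.mul_sum, Fin.sum_univ_eq_sum_range
    (fun i => 1 / (L:ℝ) * frobNorm (W i) ^ 2)]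
  refine Finset.sum_le_sum fun i _ => ?_
  rw [← Finset.mul_sum]
  exact mul_le_mul_of_nonneg_left (bessel_frob _ _) (by positivity)

lemma frob_sq_trace {m n : ℕ} (A : Matrix (Fin m) (Fin n) ℝ) :
    frobNorm A ^ 2 = (Aᵀ * A).trace := by
  rw [frob_sq, Finset.sum_comm]
  simp [Matrix.trace, Matrix.mul_apply, sq]

lemma partB (L : ℕ) (hL : 1 ≤ L) (d : ℕ → ℕ)
    (hdim : ∀ i : ℕ, 1 ≤ i → i ≤ L - 1 → min (d 0) (d L) ≤ d i)
    (M : Matrix (Fin (d L)) (Fin (d 0)) ℝ) :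
    ∃ W : ∀ i : ℕ, Matrix (Fin (d (i + 1))) (Fin (d i)) ℝ, chainProd d W L = M ∧
      (1 / L) * ∑ i : Fin L, frobNorm (W i.1) ^ 2 ≤ schattenPow M (2 / L) := by
  classical
  have hL0 : (0:ℝ) < L := by exact_mod_cast hL
  let S := {k // evs M k ≠ 0}
  let V : Matrix (Fin (d 0)) S ℝ := (eU M).submatrix id Subtype.val
  let σ : S → ℝ := fun k => Real.sqrt (evs M k)
  have hσ : ∀ k, 0 < σ k := fun k =>
    Real.sqrt_pos.2 (lt_of_le_of_ne (evs_nonneg M k) k.2.symm)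
  let Y : Matrix (Fin (d L)) S ℝ := M * V * Matrix.diagonal (fun k => (σ k)⁻¹)
  have hV : Vᵀ * V = 1 := by
    have : Vᵀ * V = ((eU M)ᵀ * eU M).submatrix Subtype.val Subtype.val := by
      ext a b; simp [V, Matrix.mul_apply]
    rw [this, eU_tmul]
    exact Matrix.submatrix_one _ Subtype.val_injective
  have hMV : (M * V)ᵀ * (M * V) = Matrix.diagonal (fun k : S => evs M k) := by
    have : (M * V)ᵀ * (M * V) =
        ((M * eU M)ᵀ * (M * eU M)).submatrix Subtype.val Subtype.val := by
      ext a b; simp [V, Matrix.mul_apply]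
    rw [this, eU_gram]
    exact Matrix.submatrix_diagonal _ _ Subtype.val_injective
  have hY : Yᵀ * Y = 1 := by
    have : Yᵀ * Y = Matrix.diagonal (fun k => (σ k)⁻¹) * ((M * V)ᵀ * (M * V)) *
        Matrix.diagonal (fun k => (σ k)⁻¹) := by
      simp only [Y, Matrix.transpose_mul, Matrix.diagonal_transpose, Matrix.mul_assoc]
    rw [this, hMV, Matrix.diagonal_mul_diagonal, Matrix.diagonal_mul_diagonal,
      ← Matrix.diagonal_one]
    congr 1; funext k
    have h1 : evs M k = σ k * σ k := (Real.mul_self_sqrt (evs_nonneg M k)).symm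
    have := (hσ k).ne'
    rw [h1]; field_simp
  have hz : ∀ k, evs M k = 0 → ∀ i, (M * eU M) i k = 0 := by
    intro k hk i
    have h := congrFun (congrFun (eU_gram M) k) k
    rw [Matrix.diagonal_apply_eq, hk, Matrix.mul_apply] at h
    simp only [Matrix.transpose_apply] at h
    have := (Finset.sum_eq_zero_iff_of_nonneg (fun i _ => mul_self_nonneg _)).1 h i
      (Finset.mem_univ i)
    exact mul_self_eq_zero.1 this
  have hMVV : M * V * Vᵀ = M := by
    have h1 : M = (M * eU M) * (eU M)ᵀ := by rw [Matrix.mul_assoc, eU_mult, Matrix.mul_one]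
    conv_rhs => rw [h1]
    ext i j
    rw [Matrix.mul_apply, Matrix.mul_apply]
    have h2 : ∀ k : S, (M * V) i k = (M * eU M) i k := fun k => by simp [V, Matrix.mul_apply]
    simp only [h2, Matrix.transpose_apply, V, Matrix.submatrix_apply, id]
    exact sum_sub_eq (fun k => evs M k ≠ 0) (fun k => (M * eU M) i k * eU M j k)
      (fun k hk => by rw [hz k (not_not.1 hk), zero_mul])
  have hYV : Y * Matrix.diagonal σ * Vᵀ = M := by
    have : Y * Matrix.diagonal σ = M * V := by
      simp only [Y]
      rw [Matrix.mul_assoc, Matrix.diagonal_mul_diagonal]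
      have : (fun k => (σ k)⁻¹ * σ k) = fun _ => 1 := by
        funext k; exact inv_mul_cancel₀ (hσ k).ne'
      rw [this, Matrix.diagonal_one, Matrix.mul_one]
    rw [this, hMVV]
  have hcard := card_ne M
  have hexF : ∀ i : ℕ, ∃ F : Matrix (Fin (d i)) S ℝ, 1 ≤ i → i ≤ L - 1 → Fᵀ * F = 1 := by
    intro i
    by_cases hi : 1 ≤ i ∧ i ≤ L - 1
    · have h1 := hdim i hi.1 hi.2
      have h2 : Fintype.card S ≤ Fintype.card (Fin (d i)) := by
        rw [Fintype.card_fin]; exact hcard.trans (by rw [min_comm]; exact h1)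
      obtain ⟨e⟩ := Function.Embedding.nonempty_of_card_le h2
      refine ⟨(1 : Matrix (Fin (d i)) (Fin (d i)) ℝ).submatrix id e, fun _ _ => ?_⟩
      ext a b
      simp [Matrix.mul_apply, Matrix.one_apply]
    · exact ⟨0, fun a b => (hi ⟨a, b⟩).elim⟩
  choose F₀ hF₀ using hexF
  have hL' : L ≠ 0 := by omega
  obtain ⟨F, hF0, hFL, hF⟩ : ∃ F : ∀ i : ℕ, Matrix (Fin (d i)) S ℝ, F 0 = V ∧ F L = Y ∧
      ∀ i ≤ L, (F i)ᵀ * F i = 1 := by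
    refine ⟨Function.update (Function.update F₀ 0 V) L Y, ?_, ?_, ?_⟩
    · rw [Function.update_of_ne hL'.symm, Function.update_self]
    · rw [Function.update_self]
    · intro i hi
      by_cases h1 : i = L
      · subst h1; rw [Function.update_self]; exact hY
      · rw [Function.update_of_ne h1]
        by_cases h2 : i = 0
        · subst h2; rw [Function.update_self]; exact hV
        · rw [Function.update_of_ne h2]; exact hF₀ i (by omega) (by omega)
  let s : S → ℝ := fun k => σ k ^ (1 / L : ℝ)
  let W : ∀ i : ℕ, Matrix (Fin (d (i + 1))) (Fin (d i)) ℝ :=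
    fun i => F (i+1) * Matrix.diagonal s * (F i)ᵀ
  have hchain : ∀ j, j + 1 ≤ L →
      chainProd d W (j+1) = F (j+1) * Matrix.diagonal (fun k => s k ^ (j+1)) * (F 0)ᵀ := by
    intro j
    induction j with
    | zero => intro _; simp [chainProd, W]
    | succ j ih =>
      intro hj
      rw [chainProd, ih (by omega)]
      simp only [W]
      calc _ = F (j+1+1) * (Matrix.diagonal s * ((F (j+1))ᵀ * F (j+1)) *
            Matrix.diagonal (fun k => s k ^ (j+1))) * (F 0)ᵀ := by
              simp only [Matrix.mul_assoc]
        _ = _ := by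
          rw [hF _ (by omega), Matrix.mul_one, Matrix.diagonal_mul_diagonal]
          simp only [pow_succ']
  refine ⟨W, ?_, ?_⟩
  · obtain ⟨j, rfl⟩ : ∃ j, L = j + 1 := ⟨L - 1, by omega⟩
    rw [hchain j le_rfl, hFL, hF0]
    have : (fun k => s k ^ (j+1)) = σ := by
      funext k
      simp only [s]
      rw [← Real.rpow_natCast, ← Real.rpow_mul (hσ k).le, one_div,
        inv_mul_cancel₀ hL0.ne', Real.rpow_one]
    rw [this, hYV]
  · have hn : ∀ i : Fin L, frobNorm (W i.1) ^ 2 = ∑ k : S, σ k ^ (2 / L : ℝ) := by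
      intro i
      rw [frob_sq_trace]
      have : (W i.1)ᵀ * W i.1 = F i.1 * (Matrix.diagonal s * ((F (i.1+1))ᵀ * F (i.1+1)) *
          Matrix.diagonal s * (F i.1)ᵀ) := by
        simp only [W, Matrix.transpose_mul, Matrix.transpose_transpose,
          Matrix.diagonal_transpose, Matrix.mul_assoc]
      rw [this, Matrix.trace_mul_comm, hF _ (by omega), Matrix.mul_one, Matrix.mul_assoc,
        hF _ (by omega), Matrix.mul_one, Matrix.diagonal_mul_diagonal, Matrix.trace_diagonal]
      refine Finset.sum_congr rfl fun k _ => ?_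
      simp only [s]
      rw [← Real.rpow_add (hσ k)]
      congr 1; ring
    simp only [hn]
    rw [Finset.sum_const, Finset.card_univ, Fintype.card_fin, nsmul_eq_mul, ← mul_assoc,
      one_div, inv_mul_cancel₀ hL0.ne', one_mul]
    exact sum_le_schattenPow M _

/-- Equivalence between the ℓ²-regularized deep matrix factorization problem and
the Schatten-(2/L) regularized problem: (i) the end-to-end product of any global
minimizer of `𝓛` globally minimizes `𝓛_{M♮}`; (ii) any global minimizer of
`𝓛_{M♮}` is the end-to-end product of some global minimizer of `𝓛`. -/
theorem stmt5 (L : ℕ) (hL : 1 ≤ L) (lam : ℝ) (hlam : 0 < lam) (d : ℕ → ℕ)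
    (hdim : ∀ i : ℕ, 1 ≤ i → i ≤ L - 1 → min (d 0) (d L) ≤ d i)
    (Mnat : Matrix (Fin (d L)) (Fin (d 0)) ℝ) :
    (∀ W : ∀ i : ℕ, Matrix (Fin (d (i + 1))) (Fin (d i)) ℝ,
      (∀ W' : ∀ i : ℕ, Matrix (Fin (d (i + 1))) (Fin (d i)) ℝ,
        deepLoss L lam d Mnat W ≤ deepLoss L lam d Mnat W') →
      ∀ X : Matrix (Fin (d L)) (Fin (d 0)) ℝ,
        schattenLoss L lam Mnat (chainProd d W L) ≤ schattenLoss L lam Mnat X) ∧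
    (∀ Mstar : Matrix (Fin (d L)) (Fin (d 0)) ℝ,
      (∀ X : Matrix (Fin (d L)) (Fin (d 0)) ℝ,
        schattenLoss L lam Mnat Mstar ≤ schattenLoss L lam Mnat X) →
      ∃ W : ∀ i : ℕ, Matrix (Fin (d (i + 1))) (Fin (d i)) ℝ,
        (∀ W' : ∀ i : ℕ, Matrix (Fin (d (i + 1))) (Fin (d i)) ℝ,
          deepLoss L lam d Mnat W ≤ deepLoss L lam d Mnat W') ∧
        chainProd d W L = Mstar) := by
  have hL0 : (0:ℝ) < L := by exact_mod_cast hL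
  have hA : ∀ W : ∀ i : ℕ, Matrix (Fin (d (i + 1))) (Fin (d i)) ℝ,
      schattenLoss L lam Mnat (chainProd d W L) ≤ deepLoss L lam d Mnat W := by
    intro W
    have h := mul_le_mul_of_nonneg_left (partA L hL d W) hlam.le
    unfold schattenLoss deepLoss
    have e : lam / L * ∑ i : Fin L, frobNorm (W i.1) ^ 2 =
      lam * (1 / L * ∑ i : Fin L, frobNorm (W i.1) ^ 2) := by ring
    rw [e]; linarith
  have hB : ∀ X : Matrix (Fin (d L)) (Fin (d 0)) ℝ,
      ∃ W : ∀ i : ℕ, Matrix (Fin (d (i + 1))) (Fin (d i)) ℝ, chainProd d W L = X ∧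
        deepLoss L lam d Mnat W ≤ schattenLoss L lam Mnat X := by
    intro X
    obtain ⟨W, hW, h⟩ := partB L hL d hdim X
    refine ⟨W, hW, ?_⟩
    have h := mul_le_mul_of_nonneg_left h hlam.le
    unfold schattenLoss deepLoss
    have e : lam / L * ∑ i : Fin L, frobNorm (W i.1) ^ 2 =
      lam * (1 / L * ∑ i : Fin L, frobNorm (W i.1) ^ 2) := by ring
    rw [e, hW]; linarith
  refine ⟨fun W hW X => ?_, fun Ms hM => ?_⟩
  · obtain ⟨W', -, h⟩ := hB X
    exact (hA W).trans ((hW W').trans h)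
  · obtain ⟨W, hW, h⟩ := hB Ms
    exact ⟨W, fun W' => h.trans ((hM _).trans (hA W')), hW⟩
end
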